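/- Let G be a finite group. Then for every integer g ≥ 1 and every u ∈ G, the number of tuples (x_1,…,x_g,y_1,…,y_g) ∈ G^{2g} satisfying ∏_{i=1}^{g} x_i y_i x_i⁻¹ y_i⁻¹ = u equals |G|^{2g-1} · ∑_{χ ∈ Irr(G)} χ(u⁻¹)/χ(1)^{2g-1}, where Irr(G) denotes the set of irreducible complex characters of G. -/

import Mathlib

/-- `χ : G → ℂ` is the character of some irreducible finite-dimensional complex
representation of `G`. -/
def IsIrrChar (G : Type*) [Group G] (χ : G → ℂ) : Prop :=
  ∃ (V : Type) (_ : AddCommGroup V) (_ : Module ℂ V),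
    FiniteDimensional ℂ V ∧ Nontrivial V ∧
    ∃ ρ : Representation ℂ G V,
      (∀ W : Submodule ℂ V, (∀ g : G, W.map (ρ g) ≤ W) → W = ⊥ ∨ W = ⊤) ∧
      ∀ g, χ g = LinearMap.trace ℂ V (ρ g)

/-!
By Schur's lemma the sum of an irreducible representation `ρ` over all commutators is the scalar
`(|G| / χ(1))²`; multiplying `g` such sums gives `∑ₚ ρ(∏ᵢ [xᵢ, yᵢ]) = (|G| / χ(1))^{2g}`. The
tuples with product `u` are then counted through `∑_χ χ(1) χ(x) = |G| δ_{x,1}`, which comes from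
taking the trace of multiplication by `x` on `ℂ[G]` in its two guises: the basis `G`, and the
Wedderburn product of matrix algebras, whose factors are exactly the irreducible representations.
-/

open scoped commutatorElement

lemma sum_prod_ofFn {α R : Type*} [Fintype α] [Semiring R] (f : α → R) (n : ℕ) :
    ∑ p : Fin n → α, (List.ofFn fun i => f (p i)).prod = (∑ a, f a) ^ n := by
  simpa only [MultilinearMap.mkPiAlgebraFin_apply, List.ofFn_const, List.prod_replicate] using
    ((MultilinearMap.mkPiAlgebraFin ℕ n R).map_sum fun _ => f).symm

section RegularTrace

variable {R : Type*} [CommRing R]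

lemma trace_mulLeft_eq_sum_repr {A ι : Type*} [Ring A] [Algebra R A] [Fintype ι]
    (b : Module.Basis ι R A) (a : A) :
    LinearMap.trace R A (LinearMap.mulLeft R a) = ∑ i, b.repr (a * b i) i := by
  classical
  rw [LinearMap.trace_eq_matrix_trace R b, Matrix.trace]
  simp only [Matrix.diag_apply, LinearMap.toMatrix_apply, LinearMap.mulLeft_apply]

lemma trace_mulLeft_algEquiv {A B : Type*} [Ring A] [Algebra R A] [Ring B] [Algebra R B]
    (e : A ≃ₐ[R] B) (a : A) :
    LinearMap.trace R B (LinearMap.mulLeft R (e a)) =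
      LinearMap.trace R A (LinearMap.mulLeft R a) := by
  rw [← LinearMap.trace_conj' (LinearMap.mulLeft R a) e.toLinearEquiv]
  congr 1
  ext b
  simp [LinearEquiv.conj_apply]

lemma trace_mulLeft_pi {ι : Type*} [Fintype ι] {S : ι → Type*} [∀ i, Ring (S i)]
    [∀ i, Algebra R (S i)] [∀ i, Module.Free R (S i)] [∀ i, Module.Finite R (S i)]
    (x : ∀ i, S i) :
    LinearMap.trace R (∀ i, S i) (LinearMap.mulLeft R x) =
      ∑ i, LinearMap.trace R (S i) (LinearMap.mulLeft R (x i)) := by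
  classical
  let b (i : ι) := Module.Free.chooseBasis R (S i)
  rw [trace_mulLeft_eq_sum_repr (Pi.basis b), Fintype.sum_sigma]
  simp [trace_mulLeft_eq_sum_repr (b _), Pi.basis_repr, Pi.basis_apply]

lemma trace_mulLeft_matrix {n : Type*} [Fintype n] (A : Matrix n n R) :
    LinearMap.trace R (Matrix n n R) (LinearMap.mulLeft R A) = Fintype.card n * A.trace := by
  classical
  rw [trace_mulLeft_eq_sum_repr (Matrix.stdBasis R n n), Fintype.sum_prod_type]
  simp [Matrix.stdBasis, Matrix.mul_apply, Pi.single_apply, ite_apply, Matrix.trace,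
    Finset.mul_sum]

lemma trace_mulLeft_monoidAlgebra_of {G : Type*} [Group G] [Fintype G] [DecidableEq G] (x : G) :
    LinearMap.trace R (MonoidAlgebra R G) (LinearMap.mulLeft R (MonoidAlgebra.of R G x)) =
      if x = 1 then (Fintype.card G : R) else 0 := by
  rw [trace_mulLeft_eq_sum_repr (MonoidAlgebra.basis G R)]
  simp [MonoidAlgebra.basis, MonoidAlgebra.single_mul_single, Finsupp.single_apply]

end RegularTrace

section Irreducible

open Representation

variable {k G V : Type*} [Field k] [AddCommGroup V] [Module k V]

lemma isIrreducible_iff_forall_map_le [Monoid G] (ρ : Representation k G V) :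
    IsIrreducible ρ ↔ Nontrivial V ∧
      ∀ W : Submodule k V, (∀ g, W.map (ρ g) ≤ W) → W = ⊥ ∨ W = ⊤ := by
  constructor
  · intro hρ
    refine ⟨IsSimpleModule.nontrivial (MonoidAlgebra k G) ρ.asModule, fun W hW => ?_⟩
    let W' : Subrepresentation ρ := ⟨W, fun g _ hv => hW g ⟨_, hv, rfl⟩⟩
    exact (eq_bot_or_eq_top W').imp (congrArg Subrepresentation.toSubmodule)
      (congrArg Subrepresentation.toSubmodule)
  · rintro ⟨_, h⟩
    have : Nontrivial (Subrepresentation ρ) :=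
      ⟨⊥, ⊤, fun e => bot_ne_top (α := Submodule k V) (congrArg Subrepresentation.toSubmodule e)⟩
    refine ⟨fun W => (h W.toSubmodule fun g => ?_).imp
      (fun e => Subrepresentation.toSubmodule_injective e)
      (fun e => Subrepresentation.toSubmodule_injective e)⟩
    rintro _ ⟨v, hv, rfl⟩
    exact W.apply_mem_toSubmodule g hv

lemma isIrreducible_of_surjective_asAlgebraHom [Monoid G] [Nontrivial V]
    (ρ : Representation k G V) (hρ : Function.Surjective ρ.asAlgebraHom) : IsIrreducible ρ := by
  have : RingHomSurjective ρ.asAlgebraHom.toRingHom := ⟨hρ⟩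
  let l : ρ.asModule →ₛₗ[ρ.asAlgebraHom.toRingHom] V :=
    { toFun := ρ.asModuleEquiv, map_add' := fun _ _ => rfl, map_smul' := fun _ _ => rfl }
  rw [irreducible_iff_isSimpleModule_asModule,
    l.isSimpleModule_iff_of_bijective ρ.asModuleEquiv.bijective]
  infer_instance

lemma trace_asAlgebraHom_eq_of_character_eq [Monoid G] {W : Type*} [AddCommGroup W] [Module k W]
    {ρ : Representation k G V} {σ : Representation k G W} (h : ρ.character = σ.character)
    (a : MonoidAlgebra k G) :
    LinearMap.trace k V (ρ.asAlgebraHom a) = LinearMap.trace k W (σ.asAlgebraHom a) := by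
  induction a using MonoidAlgebra.induction_on with
  | of g => simpa only [asAlgebraHom_of, character] using congrFun h g
  | add a b ha hb => simp only [map_add, ha, hb]
  | smul r a ha => simp only [map_smul, ha]

section CharZero

variable [CharZero k] [FiniteDimensional k V]

lemma character_one_ne_zero [Monoid G] (ρ : Representation k G V) [IsIrreducible ρ] :
    ρ.character 1 ≠ 0 := by
  have : Nontrivial V := ((isIrreducible_iff_forall_map_le ρ).1 inferInstance).1
  rw [char_one]
  exact_mod_cast Module.finrank_pos.ne'

variable [IsAlgClosed k]

lemma eq_trace_div_smul_one_of_commute [Monoid G] (ρ : Representation k G V) [IsIrreducible ρ]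
    (f : Module.End k V) (hf : ∀ g, Commute f (ρ g)) :
    f = (LinearMap.trace k V f / ρ.character 1) • (1 : Module.End k V) := by
  obtain ⟨c, hc⟩ :=
    (IsIrreducible.algebraMap_intertwiningMap_bijective_of_isAlgClosed (ρ := ρ)).2 ⟨f, hf⟩
  obtain rfl : c • (1 : Module.End k V) = f := congrArg IntertwiningMap.toLinearMap hc
  have hρ := character_one_ne_zero ρ
  rw [char_one] at hρ ⊢
  simp [hρ]

variable [Group G] [Fintype G]

open scoped Classical in
lemma sum_character_mul_character_inv {W : Type*} [AddCommGroup W] [Module k W]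
    [FiniteDimensional k W] (ρ : Representation k G V) (σ : Representation k G W)
    [IsIrreducible ρ] [IsIrreducible σ] :
    ∑ g, ρ.character g * σ.character g⁻¹ =
      if Nonempty (σ.Equiv ρ) then (Fintype.card G : k) else 0 := by
  have hG : (Nat.card G : k) ≠ 0 := by simp
  have : Invertible (Nat.card G : k) := invertibleOfNonzero hG
  rw [(inv_mul_eq_iff_eq_mul₀ hG).1 (char_orthonormal ρ σ), mul_ite, mul_one, mul_zero,
    Nat.card_eq_fintype_card]

variable (ρ : Representation k G V) [IsIrreducible ρ]

lemma sum_apply_conj (y : G) :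
    ∑ x, ρ (x * y * x⁻¹) =
      (Fintype.card G * ρ.character y / ρ.character 1) • (1 : Module.End k V) := by
  have hcomm (h : G) : Commute (∑ x, ρ (x * y * x⁻¹)) (ρ h) := by
    rw [commute_iff_eq, Finset.sum_mul, Finset.mul_sum]
    refine Fintype.sum_equiv (Equiv.mulLeft h⁻¹) _ _ fun x => ?_
    simp only [← map_mul, Equiv.coe_mulLeft, mul_assoc, mul_inv_rev, inv_inv, mul_inv_cancel_left]
  have htrace : LinearMap.trace k V (∑ x, ρ (x * y * x⁻¹)) = Fintype.card G * ρ.character y := by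
    calc LinearMap.trace k V (∑ x, ρ (x * y * x⁻¹))
        = ∑ x, ρ.character (x * y * x⁻¹) := map_sum _ _ _
      _ = Fintype.card G * ρ.character y := by simp
  rw [← htrace]
  exact eq_trace_div_smul_one_of_commute ρ _ hcomm

lemma sum_character_smul_inv :
    ∑ y, ρ.character y • ρ y⁻¹ = (Fintype.card G / ρ.character 1) • (1 : Module.End k V) := by
  have hcomm (h : G) : Commute (∑ y, ρ.character y • ρ y⁻¹) (ρ h) := by
    rw [commute_iff_eq, Finset.sum_mul, Finset.mul_sum]
    refine Fintype.sum_equiv (MulAut.conj h⁻¹).toEquiv _ _ fun y => ?_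
    have hχ : ρ.character (MulAut.conj h⁻¹ y) = ρ.character y := ρ.char_conj y h⁻¹
    simp only [MulEquiv.toEquiv_eq_coe, EquivLike.coe_coe, hχ]
    simp [← map_mul, mul_assoc]
  have htrace : LinearMap.trace k V (∑ y, ρ.character y • ρ y⁻¹) = Fintype.card G := by
    have horth := sum_character_mul_character_inv ρ ρ
    rw [if_pos ⟨Representation.Equiv.refl ρ⟩] at horth
    simpa only [map_sum, map_smul, smul_eq_mul, character] using horth
  rw [← htrace]
  exact eq_trace_div_smul_one_of_commute ρ _ hcomm

lemma sum_apply_commutator :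
    ∑ a : G × G, ρ ⁅a.1, a.2⁆ =
      (Fintype.card G / ρ.character 1) ^ 2 • (1 : Module.End k V) := by
  calc ∑ a : G × G, ρ ⁅a.1, a.2⁆
      = ∑ y, (∑ x, ρ (x * y * x⁻¹)) * ρ y⁻¹ := by
        simp only [Fintype.sum_prod_type_right, commutatorElement_def, map_mul ρ _ (_⁻¹ : G),
          Finset.sum_mul]
    _ = (Fintype.card G / ρ.character 1 : k) • ∑ y, ρ.character y • ρ y⁻¹ := by
        simp only [sum_apply_conj, smul_mul_assoc, one_mul, Finset.smul_sum, smul_smul,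
          div_mul_eq_mul_div]
    _ = _ := by rw [sum_character_smul_inv, smul_smul, sq]

end CharZero

end Irreducible

section WedderburnBlock

open Representation

variable {k G ι : Type*} [Field k] {d : ι → ℕ}

/-- The representation of `G` on `kᵈ` afforded by the `i`-th factor of an isomorphism of `k[G]` with
a product of matrix algebras. -/
noncomputable def blockRep [Monoid G]
    (e : MonoidAlgebra k G ≃ₐ[k] ∀ i, Matrix (Fin (d i)) (Fin (d i)) k) (i : ι) :
    Representation k G (Fin (d i) → k) :=
  (MonoidAlgebra.lift k _ G).symm
    ((Matrix.toLinAlgEquiv' : Matrix (Fin (d i)) (Fin (d i)) k ≃ₐ[k] _).toAlgHom.comp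
      ((Pi.evalAlgHom k _ i).comp e.toAlgHom))

section Monoid

variable [Monoid G] (e : MonoidAlgebra k G ≃ₐ[k] ∀ i, Matrix (Fin (d i)) (Fin (d i)) k) (i : ι)

lemma asAlgebraHom_blockRep (a : MonoidAlgebra k G) :
    (blockRep e i).asAlgebraHom a = Matrix.toLinAlgEquiv' (e a i) := by
  rw [asAlgebraHom_def, blockRep, Equiv.apply_symm_apply]
  rfl

lemma trace_asAlgebraHom_blockRep (a : MonoidAlgebra k G) :
    LinearMap.trace k _ ((blockRep e i).asAlgebraHom a) = (e a i).trace := by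
  rw [asAlgebraHom_blockRep]
  exact Matrix.trace_toLin'_eq (e a i)

lemma character_blockRep (x : G) :
    (blockRep e i).character x = (e (MonoidAlgebra.of k G x) i).trace := by
  rw [← trace_asAlgebraHom_blockRep, asAlgebraHom_of, character]

lemma isIrreducible_blockRep [NeZero (d i)] : IsIrreducible (blockRep e i) := by
  refine isIrreducible_of_surjective_asAlgebraHom _ ?_
  simp only [Function.Surjective, asAlgebraHom_blockRep]
  exact Matrix.toLinAlgEquiv'.surjective.comp ((Function.surjective_eval i).comp e.surjective)

lemma character_blockRep_injective [CharZero k] [∀ i, NeZero (d i)] :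
    Function.Injective fun i => (blockRep e i).character := by
  classical
  intro i j hij
  by_contra hne
  have htrace := trace_asAlgebraHom_eq_of_character_eq hij (e.symm (Pi.single i 1))
  simp [trace_asAlgebraHom_blockRep, Pi.single_eq_of_ne (Ne.symm hne), NeZero.ne] at htrace

end Monoid

variable [Group G] (e : MonoidAlgebra k G ≃ₐ[k] ∀ i, Matrix (Fin (d i)) (Fin (d i)) k)

lemma sum_character_blockRep_one_mul [Fintype G] [DecidableEq G] [Fintype ι] (x : G) :
    ∑ i, (blockRep e i).character 1 * (blockRep e i).character x =
      if x = 1 then (Fintype.card G : k) else 0 := by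
  rw [← trace_mulLeft_monoidAlgebra_of x, ← trace_mulLeft_algEquiv e, trace_mulLeft_pi]
  simp only [trace_mulLeft_matrix, character_blockRep, char_one, Module.finrank_fin_fun,
    Fintype.card_fin]

-- A `σ` missing from the blocks would be orthogonal to the regular character, whereas pairing
-- with the regular character gives `|G| σ(1) ≠ 0`.
lemma exists_equiv_blockRep [Finite G] [Finite ι] [CharZero k] [IsAlgClosed k]
    [∀ i, NeZero (d i)] {V : Type*} [AddCommGroup V] [Module k V] [FiniteDimensional k V]
    (σ : Representation k G V) [IsIrreducible σ] : ∃ i, Nonempty (σ.Equiv (blockRep e i)) := by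
  classical
  cases nonempty_fintype G
  cases nonempty_fintype ι
  by_contra! hσ
  have hblock (i : ι) : IsIrreducible (blockRep e i) := isIrreducible_blockRep e i
  have horth (i : ι) : ∑ g, (blockRep e i).character g * σ.character g⁻¹ = 0 := by
    rw [sum_character_mul_character_inv, if_neg (not_nonempty_iff.2 (hσ i))]
  have hzero : (Fintype.card G : k) * σ.character 1 = 0 := by
    calc (Fintype.card G : k) * σ.character 1
        = ∑ g, (∑ i, (blockRep e i).character 1 * (blockRep e i).character g) *
            σ.character g⁻¹ := by
          simp [sum_character_blockRep_one_mul, -char_one]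
      _ = ∑ i, (blockRep e i).character 1 *
            ∑ g, (blockRep e i).character g * σ.character g⁻¹ := by
          simp only [Finset.sum_mul, Finset.mul_sum, mul_assoc]
          exact Finset.sum_comm
      _ = 0 := by simp only [horth, mul_zero, Finset.sum_const_zero]
  exact mul_ne_zero (by simp) (character_one_ne_zero σ) hzero

end WedderburnBlock

section IrrChar

open Representation

variable {G : Type*} [Group G]

lemma isIrrChar_iff {χ : G → ℂ} :
    IsIrrChar G χ ↔ ∃ (V : Type) (_ : AddCommGroup V) (_ : Module ℂ V) (ρ : Representation ℂ G V),
      FiniteDimensional ℂ V ∧ IsIrreducible ρ ∧ ρ.character = χ := by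
  constructor
  · rintro ⟨V, _, _, hfin, hV, ρ, hρ, hχ⟩
    exact ⟨V, _, _, ρ, hfin, (isIrreducible_iff_forall_map_le ρ).2 ⟨hV, hρ⟩,
      funext fun g => (hχ g).symm⟩
  · rintro ⟨V, _, _, ρ, hfin, hρ, rfl⟩
    obtain ⟨hV, hW⟩ := (isIrreducible_iff_forall_map_le ρ).1 hρ
    exact ⟨V, _, _, hfin, hV, ρ, hW, fun _ => rfl⟩

lemma IsIrrChar.apply_one_ne_zero {χ : G → ℂ} (hχ : IsIrrChar G χ) : χ 1 ≠ 0 := by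
  obtain ⟨V, _, _, ρ, _, _, rfl⟩ := isIrrChar_iff.1 hχ
  exact character_one_ne_zero ρ

lemma range_character_blockRep [Finite G] {ι : Type*} [Finite ι] {d : ι → ℕ}
    [∀ i, NeZero (d i)] (e : MonoidAlgebra ℂ G ≃ₐ[ℂ] ∀ i, Matrix (Fin (d i)) (Fin (d i)) ℂ) :
    Set.range (fun i => (blockRep e i).character) = {χ : G → ℂ | IsIrrChar G χ} := by
  ext χ
  rw [Set.mem_ofPred_eq, isIrrChar_iff]
  constructor
  · rintro ⟨i, rfl⟩
    exact ⟨_, _, _, blockRep e i, inferInstance, isIrreducible_blockRep e i, rfl⟩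
  · rintro ⟨V, _, _, σ, _, _, rfl⟩
    obtain ⟨i, ⟨φ⟩⟩ := exists_equiv_blockRep e σ
    exact ⟨i, (char_iso φ).symm⟩

variable (G) in
lemma finite_setOf_isIrrChar [Finite G] : {χ : G → ℂ | IsIrrChar G χ}.Finite := by
  obtain ⟨n, d, _, ⟨e⟩⟩ :=
    IsSemisimpleRing.exists_algEquiv_pi_matrix_of_isAlgClosed ℂ (MonoidAlgebra ℂ G)
  rw [← range_character_blockRep e]
  exact Set.finite_range _

variable (G) in
/-- The set `Irr(G)` of irreducible complex characters of a finite group, as a `Finset`. -/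
noncomputable def irrChars [Finite G] : Finset (G → ℂ) :=
  (finite_setOf_isIrrChar G).toFinset

lemma mem_irrChars [Finite G] {χ : G → ℂ} : χ ∈ irrChars G ↔ IsIrrChar G χ :=
  (finite_setOf_isIrrChar G).mem_toFinset

lemma sum_irrChars_one_mul [Fintype G] [DecidableEq G] (x : G) :
    ∑ χ ∈ irrChars G, χ 1 * χ x = if x = 1 then (Fintype.card G : ℂ) else 0 := by
  classical
  obtain ⟨n, d, _, ⟨e⟩⟩ :=
    IsSemisimpleRing.exists_algEquiv_pi_matrix_of_isAlgClosed ℂ (MonoidAlgebra ℂ G)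
  have himage : irrChars G = Finset.univ.image fun i => (blockRep e i).character := by
    ext χ
    simpa [mem_irrChars] using (Set.ext_iff.1 (range_character_blockRep e) χ).symm
  rw [himage, Finset.sum_image (character_blockRep_injective e).injOn,
    sum_character_blockRep_one_mul]

end IrrChar

section CommutatorProduct

open Representation

variable {G : Type*} [Group G]

/-- The product `∏ᵢ xᵢ yᵢ xᵢ⁻¹ yᵢ⁻¹`, in increasing order of `i`, for a tuple `p = (x, y)`. -/
def commutatorProd {n : ℕ} (p : (Fin n → G) × (Fin n → G)) : G :=
  (List.ofFn fun i => ⁅p.1 i, p.2 i⁆).prod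

variable [Fintype G]

lemma sum_apply_commutatorProd {k V : Type*} [Field k] [CharZero k] [IsAlgClosed k]
    [AddCommGroup V] [Module k V] [FiniteDimensional k V] (ρ : Representation k G V)
    [IsIrreducible ρ] (n : ℕ) :
    ∑ p : (Fin n → G) × (Fin n → G), ρ (commutatorProd p) =
      (Fintype.card G / ρ.character 1) ^ (2 * n) • (1 : Module.End k V) := by
  calc ∑ p : (Fin n → G) × (Fin n → G), ρ (commutatorProd p)
      = ∑ q : Fin n → G × G, (List.ofFn fun i => ρ ⁅(q i).1, (q i).2⁆).prod := by
        refine (Fintype.sum_equiv (Equiv.arrowProdEquivProdArrow _ _ _) _ _ fun q => ?_).symm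
        simp [commutatorProd, map_list_prod, List.map_ofFn, Function.comp_def]
    _ = (∑ a : G × G, ρ ⁅a.1, a.2⁆) ^ n := sum_prod_ofFn (fun a : G × G => ρ ⁅a.1, a.2⁆) n
    _ = _ := by rw [sum_apply_commutator, smul_pow, one_pow, pow_mul]

lemma IsIrrChar.sum_commutatorProd_mul {χ : G → ℂ} (hχ : IsIrrChar G χ) (n : ℕ) (u : G) :
    ∑ p : (Fin n → G) × (Fin n → G), χ (commutatorProd p * u) =
      (Fintype.card G / χ 1) ^ (2 * n) * χ u := by
  obtain ⟨V, _, _, ρ, _, _, rfl⟩ := isIrrChar_iff.1 hχ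
  calc ∑ p : (Fin n → G) × (Fin n → G), ρ.character (commutatorProd p * u)
      = LinearMap.trace ℂ V ((∑ p : (Fin n → G) × (Fin n → G), ρ (commutatorProd p)) * ρ u) := by
        simp only [character, map_mul ρ, Finset.sum_mul, map_sum]
    _ = _ := by
        rw [sum_apply_commutatorProd, smul_mul_assoc, one_mul, map_smul, smul_eq_mul]
        rfl

lemma card_mul_card_commutatorProd_eq (n : ℕ) (u : G) :
    (Fintype.card G : ℂ) *
        Nat.card {p : (Fin n → G) × (Fin n → G) // commutatorProd p = u} =
      ∑ χ ∈ irrChars G, χ 1 * ((Fintype.card G / χ 1) ^ (2 * n) * χ u⁻¹) := by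
  classical
  calc (Fintype.card G : ℂ) * Nat.card {p : (Fin n → G) × (Fin n → G) // commutatorProd p = u}
      = ∑ p : (Fin n → G) × (Fin n → G),
          if commutatorProd p * u⁻¹ = 1 then (Fintype.card G : ℂ) else 0 := by
        simp only [mul_inv_eq_one]
        rw [Nat.card_eq_fintype_card, Fintype.card_subtype, ← Finset.sum_filter, Finset.sum_const,
          nsmul_eq_mul, mul_comm]
    _ = ∑ χ ∈ irrChars G, χ 1 *
          ∑ p : (Fin n → G) × (Fin n → G), χ (commutatorProd p * u⁻¹) := by
        simp only [← sum_irrChars_one_mul, Finset.mul_sum]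
        exact Finset.sum_comm
    _ = _ := Finset.sum_congr rfl fun χ hχ => by
        rw [(mem_irrChars.1 hχ).sum_commutatorProd_mul]

end CommutatorProduct

/-- Frobenius-type counting formula: the number of `2g`-tuples with
`∏ᵢ xᵢ yᵢ xᵢ⁻¹ yᵢ⁻¹ = u` equals `|G|^{2g-1} ∑_{χ ∈ Irr G} χ(u⁻¹)/χ(1)^{2g-1}`.
This is the finite-group analogue of the total mass of the conditioned Haar
measure `μ_H` on the moduli space of flat connections of topological type `u`. -/
theorem finite_commutator_product_count
    {G : Type*} [Group G] [Fintype G]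
    (g : ℕ) (hg : 1 ≤ g) (u : G) :
    (Nat.card {p : (Fin g → G) × (Fin g → G) //
        (List.ofFn fun i : Fin g => p.1 i * p.2 i * (p.1 i)⁻¹ * (p.2 i)⁻¹).prod = u} : ℂ) =
      (Fintype.card G : ℂ) ^ (2 * g - 1) *
        ∑ᶠ χ ∈ {χ : G → ℂ | IsIrrChar G χ}, χ u⁻¹ / χ 1 ^ (2 * g - 1) := by
  have hG : (Fintype.card G : ℂ) ≠ 0 := by simp
  rw [finsum_mem_eq_finite_toFinset_sum _ (finite_setOf_isIrrChar G)]
  apply mul_left_cancel₀ hG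
  refine (card_mul_card_commutatorProd_eq g u).trans ?_
  rw [Finset.mul_sum, Finset.mul_sum]
  refine Finset.sum_congr rfl fun χ hχ => ?_
  have hχ1 : χ 1 ≠ 0 := (mem_irrChars.1 hχ).apply_one_ne_zero
  obtain ⟨m, hm⟩ : ∃ m, 2 * g = m + 1 := ⟨2 * g - 1, by omega⟩
  rw [hm, Nat.add_sub_cancel, div_pow]
  field_simp
  ring
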